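/- Let k be an algebraically closed field, let G be a finite abelian group whose order is invertible in k, and let V = V_1 ⊕ ⋯ ⊕ V_n be a finite-dimensional k-vector space. Suppose G acts transitively on the index set {1,…,n} and acts k-linearly on V in such a way that g(V_i) ⊆ V_{g(i)} for all g ∈ G and all i. Then there exists a basis B of V such that every element of G acts on V in the basis B by a generalized permutation matrix; that is, for every g ∈ G and every v ∈ B, g(v) is a nonzero scalar multiple of an element of B. -/

import Mathlib

/-!
A finite abelian group whose order is invertible in an algebraically closed field acts by
simultaneously diagonalizable operators: each operator is killed by the separable polynomial
`X ^ |G| - 1`, so it is semisimple, and commuting diagonalizable operators have joint eigenvectors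
spanning the space. A basis made of joint eigenvectors has the required property, since every
group element maps each basis vector to a nonzero multiple of that same vector.
-/

theorem isSemisimple_of_pow_eq_one {k M : Type*} [Field k] [AddCommGroup M] [Module k M]
    {m : ℕ} (hm : (m : k) ≠ 0) {f : Module.End k M} (hf : f ^ m = 1) : f.IsSemisimple := by
  refine Module.End.isSemisimple_of_squarefree_aeval_eq_zero
    (p := (Polynomial.X ^ m - 1 : Polynomial k))
    (Polynomial.X_pow_sub_one_separable_iff.mpr hm).squarefree ?_
  simp [hf]

theorem span_jointEigenvectors_eq_top {k : Type*} [Field k] [IsAlgClosed k]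
    {G : Type*} [CommGroup G] (hGk : (Nat.card G : k) ≠ 0)
    {M : Type*} [AddCommGroup M] [Module k M] [FiniteDimensional k M] (ρ : G →* (M ≃ₗ[k] M)) :
    Submodule.span k {v : M | ∃ χ : G → k, ∀ g, ρ g v = χ g • v} = ⊤ := by
  let f : G →* Module.End k M := (LinearEquiv.automorphismGroup.toLinearMapMonoidHom).comp ρ
  have hss (g : G) : (f g).IsSemisimple :=
    isSemisimple_of_pow_eq_one hGk (by rw [← map_pow, pow_card_eq_one', map_one])
  have htop :=
    Module.End.iSup_iInf_maxGenEigenspace_eq_top_of_iSup_maxGenEigenspace_eq_top_of_commute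
      (fun g ↦ f g) (fun g h _ ↦ (Commute.all g h).map f)
      (fun g ↦ Module.End.iSup_maxGenEigenspace_eq_top (f g))
  rw [eq_top_iff, ← htop]
  refine iSup_le fun χ v hv ↦ Submodule.subset_span ⟨χ, fun g ↦ ?_⟩
  have hg := (Submodule.mem_iInf _).mp hv g
  -- Semisimplicity upgrades generalized eigenvectors to genuine eigenvectors.
  rw [(hss g).isFinitelySemisimple.maxGenEigenspace_eq_eigenspace] at hg
  exact Module.End.mem_eigenspace_iff.mp hg

open scoped BigOperators

/-- **Lemma 3.1 (Lemma `perm`).** Let `k` be an algebraically closed field, `G` a finite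
abelian group whose order is invertible in `k`, and `V = V_1 ⊕ ⋯ ⊕ V_n` a
finite-dimensional `k`-vector space.  If `G` acts transitively on `{1, …, n}` and
`k`-linearly on `V` with `g(V_i) ⊆ V_{g(i)}`, then there is a basis `B` of `V` such that
every element of `G` acts in the basis `B` by a generalized permutation matrix, i.e.
maps every element of `B` to a nonzero scalar multiple of an element of `B`. -/
theorem stmt0 {k : Type} [Field k] [IsAlgClosed k]
    {G : Type} [CommGroup G] [Fintype G] (hGk : (Nat.card G : k) ≠ 0)
    {n : ℕ} {M : Type} [AddCommGroup M] [Module k M] [FiniteDimensional k M]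
    (W : Fin n → Submodule k M) (hW : DirectSum.IsInternal W)
    [MulAction G (Fin n)] [MulAction.IsPretransitive G (Fin n)]
    (ρ : G →* (M ≃ₗ[k] M))
    (hρ : ∀ (g : G) (i : Fin n), (W i).map (ρ g).toLinearMap ≤ W (g • i)) :
    ∃ B : Set M, Submodule.span k B = ⊤ ∧ LinearIndependent k ((↑) : B → M) ∧
      ∀ (g : G), ∀ v ∈ B, ∃ c : k, c ≠ 0 ∧ ∃ w ∈ B, ρ g v = c • w := by
  obtain ⟨B, hBS, hspan, hli⟩ :=
    exists_linearIndependent k {v : M | ∃ χ : G → k, ∀ g, ρ g v = χ g • v}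
  refine ⟨B, hspan.trans (span_jointEigenvectors_eq_top hGk ρ), hli, fun g v hv ↦ ?_⟩
  obtain ⟨χ, hχ⟩ := hBS hv
  refine ⟨χ g, fun h0 ↦ ?_, v, hv, hχ g⟩
  have hv0 : v ≠ 0 := hli.ne_zero (⟨v, hv⟩ : B)
  have hz : ρ g v = 0 := by rw [hχ g, h0, zero_smul]
  exact hv0 ((ρ g).map_eq_zero_iff.mp hz)
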